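/- arXiv:2511.07608 — 5 statements merged into one kernel-verified Lean document; each statement's English description precedes it below -/
import Mathlib

section
/- Assume the continuum hypothesis, i.e. 2^{ℵ₀} = ℵ₁. Then there exists a universal countably chromatic graph of size ℵ₁: there are a type V of cardinality ℵ₁, a simple graph G on V, and a proper coloring c : V → ℕ of G (adjacent vertices receive distinct colors), such that for every type W of cardinality ℵ₁, every simple graph H on W, and every proper coloring d : W → ℕ of H, there is an injective map f : W → V with H.Adj a b ↔ G.Adj (f a) (f b) for all a, b ∈ W, and c (f a) = d a for all a ∈ W. -/
/-!
Index vertices by `I`, a well-order of type `ω₁`, all of whose proper initial segments are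
countable. A vertex of the universal graph is a triple `(i, s, n)`: a level `i : I`, a set `s` of
levels below `i`, and a colour `n`. For `i < j`, the vertices `(i, s, n)` and `(j, t, m)` are
adjacent iff `i ∈ t` and `n ≠ m`; so `t` prescribes which levels below `j` are joined to `(j, t, m)`.
Each level has at most `2 ^ ℵ₀` vertices, hence under CH there are `ℵ₁` vertices altogether.

Given a coloured graph `H` on `W` of size `ℵ₁`, take any bijection `e : W ≃ I` and send `w` to the
vertex at level `e w` with the colour of `w` and the set of levels `e v < e w` with `H.Adj v w`.
-/

noncomputable section
open scoped Classical
open Ordinal Set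

/-- Triples `(i, s, n)` of a level, a set of lower levels, and a colour. -/
def LevelVertex (I : Type) [LinearOrder I] : Type :=
  Σ i : I, Set (Set.Iio i) × ℕ

/-- The upward half of the adjacency relation: `x` lies at a lower level than `y`, that level belongs
to the set carried by `y`, and the colours differ. -/
def LevelVertex.Below {I : Type} [LinearOrder I] (x y : LevelVertex I) : Prop :=
  (∃ h : x.1 < y.1, (⟨x.1, h⟩ : Set.Iio y.1) ∈ y.2.1) ∧ x.2.2 ≠ y.2.2

/-- The graph on triples obtained by symmetrizing `LevelVertex.Below`. -/
def levelGraph (I : Type) [LinearOrder I] : SimpleGraph (LevelVertex I) where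
  Adj x y := x.Below y ∨ y.Below x
  symm := ⟨fun _ _ h => h.symm⟩
  loopless := ⟨fun x h => by
    rcases h with h | h <;> exact h.2 rfl⟩

/-- CH enters here, to bound the number of subsets of a countable initial segment. -/
theorem mk_levelVertex (hCH : Cardinal.continuum.{0} = Cardinal.aleph 1) (I : Type) [LinearOrder I]
    (hI : Cardinal.mk I = Cardinal.aleph 1) (hc : ∀ i : I, (Set.Iio i).Countable) :
    Cardinal.mk (LevelVertex I) = Cardinal.aleph 1 := by
  have h0 : Cardinal.aleph0 ≤ Cardinal.aleph.{0} 1 := Cardinal.aleph0_le_aleph 1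
  apply le_antisymm
  · unfold LevelVertex
    rw [Cardinal.mk_sigma]
    have hf : ∀ i : I, Cardinal.mk (Set (Set.Iio i) × ℕ) ≤ Cardinal.aleph 1 := by
      intro i
      rw [Cardinal.mk_prod, Cardinal.lift_id, Cardinal.lift_id, Cardinal.mk_set, Cardinal.mk_nat]
      have h1 : Cardinal.mk (Set.Iio i) ≤ Cardinal.aleph0 :=
        Cardinal.mk_le_aleph0_iff.2 (hc i).to_subtype
      have h2 : (2 : Cardinal) ^ Cardinal.mk (Set.Iio i) ≤ Cardinal.aleph 1 := by
        rw [← hCH, ← Cardinal.two_power_aleph0]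
        exact Cardinal.power_le_power_left two_ne_zero h1
      exact (mul_le_mul' h2 h0).trans (Cardinal.mul_eq_self h0).le
    refine (Cardinal.sum_le_sum _ (fun _ => Cardinal.aleph 1) hf).trans ?_
    rw [Cardinal.sum_const', hI, Cardinal.mul_eq_self h0]
  · rw [← hI]
    refine Cardinal.mk_le_of_injective (f := fun i : I => (⟨i, ∅, 0⟩ : LevelVertex I)) ?_
    intro i j h
    exact congrArg Sigma.fst h

/-- The vertex coding `w`, given an enumeration `e` of the vertices of `H` by levels. -/
def levelCode {I W : Type} [LinearOrder I] (e : W ≃ I) (H : SimpleGraph W) (d : W → ℕ) (w : W) :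
    LevelVertex I :=
  ⟨e w, {j | H.Adj (e.symm j) w}, d w⟩

theorem below_levelCode_iff {I W : Type} [LinearOrder I] (e : W ≃ I) (H : SimpleGraph W)
    (d : W → ℕ) (hd : ∀ a b : W, H.Adj a b → d a ≠ d b) (a b : W) :
    (levelCode e H d a).Below (levelCode e H d b) ↔ e a < e b ∧ H.Adj a b := by
  change (∃ _ : e a < e b, H.Adj (e.symm (e a)) b) ∧ d a ≠ d b ↔ _
  rw [e.symm_apply_apply, exists_prop]
  exact ⟨fun h => h.1, fun h => ⟨h, hd a b h.2⟩⟩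

/-- Assuming CH, there is a universal countably chromatic graph of size `ℵ₁`:
a graph of size `ℵ₁` with a proper coloring into `ℕ` into which every
countably chromatic graph of size `ℵ₁` embeds, preserving adjacency (in both
directions) and the coloring. -/
theorem universal_countably_chromatic_of_CH
    (hCH : Cardinal.continuum = Cardinal.aleph 1) :
    ∃ (V : Type) (G : SimpleGraph V) (c : V → ℕ),
      Cardinal.mk V = Cardinal.aleph 1 ∧
      (∀ a b : V, G.Adj a b → c a ≠ c b) ∧
      ∀ (W : Type) (H : SimpleGraph W) (d : W → ℕ),
        Cardinal.mk W = Cardinal.aleph 1 →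
        (∀ a b : W, H.Adj a b → d a ≠ d b) →
        ∃ f : W → V, Function.Injective f ∧
          (∀ a b : W, H.Adj a b ↔ G.Adj (f a) (f b)) ∧
          (∀ a : W, c (f a) = d a) := by
  -- the universe level of the cardinals in `hCH` is arbitrary, so CH is first lowered to `Type`
  have hCH' : Cardinal.continuum.{0} = Cardinal.aleph 1 := by
    apply Cardinal.lift_injective
    simpa using hCH
  let I : Type := (Cardinal.aleph.{0} 1).ord.ToType
  have hI : Cardinal.mk I = Cardinal.aleph 1 := Cardinal.mk_ord_toType _
  have hc : ∀ i : I, (Set.Iio i).Countable := by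
    intro i
    have h : Cardinal.mk (Set.Iio i) < Cardinal.aleph 1 := Cardinal.mk_Iio_toType_ord_lt i
    have h' : Cardinal.mk (Set.Iio i) < Order.succ Cardinal.aleph0 :=
      h.trans_eq Cardinal.succ_aleph0.symm
    exact Cardinal.mk_le_aleph0_iff.1 (Order.lt_succ_iff.1 h')
  refine ⟨LevelVertex I, levelGraph I, fun x => x.2.2, mk_levelVertex hCH' I hI hc, ?_, ?_⟩
  · rintro a b (h | h)
    · exact h.2
    · exact h.2.symm
  · intro W H d hW hd
    obtain ⟨e⟩ := Cardinal.eq.1 (hW.trans hI.symm)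
    refine ⟨levelCode e H d, fun a b h => e.injective (congrArg Sigma.fst h), ?_, fun _ => rfl⟩
    intro a b
    change _ ↔ LevelVertex.Below _ _ ∨ LevelVertex.Below _ _
    rw [below_levelCode_iff e H d hd, below_levelCode_iff e H d hd, H.adj_comm b a, ← or_and_right]
    -- adjacent vertices are distinct, so their levels are comparable strictly
    exact ⟨fun h => ⟨lt_or_gt_of_ne (e.injective.ne h.ne), h⟩, fun h => h.2⟩
end
end

section
/- Let p ∈ P₁, let A ⊆ ω₁, and let w ∈ P₁ with u^w ⊆ A and w ≤ [p]_A, where [p]_A := (uᵖ ∩ A, Eᵖ restricted to two-element sets included in A, cᵖ restricted to uᵖ ∩ A). Then the pointwise union (u^w ∪ uᵖ, E^w ∪ Eᵖ, c^w ∪ cᵖ) is a condition in P₁ and a common extension of w and p; in particular w and p are compatible. -/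
/-!
Since `w` extends the trace `[p]_A` and lives inside `A`, the triples `w` and `p` agree wherever
both are defined: on arguments inside `A` the value of `p` is already recorded in `[p]_A`, hence in
`w`, and on arguments not inside `A` the triple `w` is undefined. So the union extends `p` as well
as `w` (`unionT_E_of_right`, `unionT_c_of_right`). Each edge of the union is an edge of `w` or of
`p`, so its two endpoints lie together in `u^w` or in `u^p`, with the colors given by that
condition; the coloring requirement for the union is therefore inherited from `w` or `p`.
-/

noncomputable section
open scoped Classical
open Ordinal Set

/-- A raw triple `(u, E, c)`: a set of ordinals, a partial edge function on
sets of ordinals (meant to be defined on two-element subsets of `u`, with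
values in `{0,1}` coded as `Bool`), and a partial coloring. -/
structure Triple where
  u : Set Ordinal
  E : Set Ordinal → Option Bool
  c : Ordinal → Option ℕ

/-- Membership in the poset `P₁`: `u` is a finite subset of `ω₁`, `E` is a
partial function defined only on two-element subsets of `u`, `c` is a function
with domain exactly `u`, and vertices of the same color are never joined by an
edge. -/
def IsCond (p : Triple) : Prop :=
  p.u.Finite ∧ (∀ x ∈ p.u, x < ω₁) ∧
  (∀ s, (p.E s).isSome → ∃ a ∈ p.u, ∃ b ∈ p.u, a ≠ b ∧ s = {a, b}) ∧
  (∀ a, (p.c a).isSome ↔ a ∈ p.u) ∧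
  (∀ s ∈ p.u, ∀ t ∈ p.u, p.c s = p.c t → (p.E {s, t}).isSome →
    p.E {s, t} = some false)

/-- `Triple.le q p` means `q ≤ p`, i.e. `q` extends `p`. -/
def Triple.le (q p : Triple) : Prop :=
  p.u ⊆ q.u ∧ (∀ s b, p.E s = some b → q.E s = some b) ∧
    (∀ a n, p.c a = some n → q.c a = some n)

/-- Compatibility in `P₁`: existence of a common extension (which is a
condition). -/
def Compat (p q : Triple) : Prop := ∃ r, IsCond r ∧ r.le p ∧ r.le q

/-- The trace `[p]_A` of `p` into `A`. -/
def Triple.trace (p : Triple) (A : Set Ordinal) : Triple where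
  u := p.u ∩ A
  E := fun s => if s ⊆ A then p.E s else none
  c := fun a => if a ∈ A then p.c a else none

/-- The pointwise union of two triples: first coordinate wins on overlaps. -/
def Triple.unionT (w p : Triple) : Triple where
  u := w.u ∪ p.u
  E := fun s => (w.E s).orElse fun _ => p.E s
  c := fun a => (w.c a).orElse fun _ => p.c a

/-- An edge value of `p` survives in the union: either its pair lies inside `A`, where `w` repeats
the value, or it does not, and then `w` is undefined at it. -/
theorem unionT_E_of_right {p w : Triple} {A : Set Ordinal} (hw : IsCond w) (hwu : w.u ⊆ A)
    (hwle : w.le (p.trace A)) {s : Set Ordinal} {b : Bool} (h : p.E s = some b) :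
    (w.unionT p).E s = some b := by
  by_cases hs : s ⊆ A
  · have h' : w.E s = some b := hwle.2.1 s b (by simp [Triple.trace, hs, h])
    simp [Triple.unionT, h']
  · have h' : w.E s = none := by
      by_contra hne
      obtain ⟨x, hx, y, hy, -, rfl⟩ := hw.2.2.1 s (Option.isSome_iff_ne_none.2 hne)
      exact hs (insert_subset (hwu hx) (singleton_subset_iff.2 (hwu hy)))
    simp [Triple.unionT, h', h]

/-- A color assigned by `p` survives in the union: at points of `A` the coloring of `w` repeats it,
and off `A` that coloring is undefined. -/
theorem unionT_c_of_right {p w : Triple} {A : Set Ordinal} (hw : IsCond w) (hwu : w.u ⊆ A)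
    (hwle : w.le (p.trace A)) {a : Ordinal} {n : ℕ} (h : p.c a = some n) :
    (w.unionT p).c a = some n := by
  by_cases ha : a ∈ A
  · have h' : w.c a = some n := hwle.2.2 a n (by simp [Triple.trace, ha, h])
    simp [Triple.unionT, h']
  · have h' : w.c a = none := by
      by_contra hne
      exact ha (hwu ((hw.2.2.2.1 a).1 (Option.isSome_iff_ne_none.2 hne)))
    simp [Triple.unionT, h', h]

/-- If a triple `r` extends a condition `q`, then `r` satisfies the coloring requirement at every
pair on which `q` already has an edge value. -/
theorem edge_eq_false_of_le {q r : Triple} (hq : IsCond q) (hle : r.le q) {s t : Ordinal}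
    (hE : (q.E {s, t}).isSome) (hc : r.c s = r.c t) : r.E {s, t} = some false := by
  obtain ⟨a, ha, b, hb, -, hab⟩ := hq.2.2.1 _ hE
  have hsub : ({s, t} : Set Ordinal) ⊆ q.u :=
    hab ▸ insert_subset ha (singleton_subset_iff.2 hb)
  have hs : s ∈ q.u := hsub (mem_insert s {t})
  have ht : t ∈ q.u := hsub (mem_insert_of_mem s (mem_singleton t))
  obtain ⟨m, hm⟩ := Option.isSome_iff_exists.1 ((hq.2.2.2.1 s).2 hs)
  obtain ⟨n, hn⟩ := Option.isSome_iff_exists.1 ((hq.2.2.2.1 t).2 ht)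
  have hqc : q.c s = q.c t := by
    rw [hm, hn, ← hle.2.2 s m hm, ← hle.2.2 t n hn, hc]
  exact hle.2.1 _ _ (hq.2.2.2.2 s hs t ht hqc hE)

/-- If `w ∈ P₁` satisfies `u^w ⊆ A` and `w ≤ [p]_A`, then the pointwise union
of `w` and `p` is a condition in `P₁` and a common extension of `w` and `p`;
in particular `w` and `p` are compatible. -/
theorem union_common_extension (p : Triple) (hp : IsCond p) (A : Set Ordinal)
    (w : Triple) (hw : IsCond w) (hwu : w.u ⊆ A)
    (hwle : w.le (p.trace A)) :
    IsCond (w.unionT p) ∧ (w.unionT p).le w ∧ (w.unionT p).le p ∧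
      Compat w p := by
  have hle_w : (w.unionT p).le w :=
    ⟨subset_union_left, fun s b h => by simp [Triple.unionT, h],
      fun a n h => by simp [Triple.unionT, h]⟩
  have hle_p : (w.unionT p).le p :=
    ⟨subset_union_right, fun _ _ h => unionT_E_of_right hw hwu hwle h,
      fun _ _ h => unionT_c_of_right hw hwu hwle h⟩
  have hE : ∀ s, ((w.unionT p).E s).isSome → (w.E s).isSome ∨ (p.E s).isSome := by
    intro s h
    cases hws : w.E s <;> simp_all [Triple.unionT]
  have hcond : IsCond (w.unionT p) := by
    refine ⟨hw.1.union hp.1, fun x hx => hx.elim (hw.2.1 x) (hp.2.1 x), ?_, ?_, ?_⟩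
    · intro s h
      rcases hE s h with h | h
      · obtain ⟨a, ha, b, hb, hab⟩ := hw.2.2.1 s h
        exact ⟨a, Or.inl ha, b, Or.inl hb, hab⟩
      · obtain ⟨a, ha, b, hb, hab⟩ := hp.2.2.1 s h
        exact ⟨a, Or.inr ha, b, Or.inr hb, hab⟩
    · intro a
      change ((w.c a).orElse fun _ => p.c a).isSome ↔ a ∈ w.u ∨ a ∈ p.u
      rw [← hw.2.2.2.1 a, ← hp.2.2.2.1 a]
      cases w.c a <;> simp
    · intro s _ t _ hc h
      rcases hE _ h with h | h
      · exact edge_eq_false_of_le hw hle_w h hc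
      · exact edge_eq_false_of_le hp hle_p h hc
  exact ⟨hcond, hle_w, hle_p, _, hcond, hle_w, hle_p⟩
end
end

section
/- Let A ⊆ ω₁ and let P₁↾A := {q ∈ P₁ : u^q ⊆ A}. Then every condition p ∈ P₁ is strongly (P₁, P₁↾A)-generic; indeed for every q ≤ p the trace [q]_A is a residue of q into P₁↾A. -/
/-! The trace `[q]_A` is a condition because restricting to `A` keeps every clause. If `w` lies in
`P₁↾A` and extends `[q]_A`, then `w` and `q` agree wherever both are defined, since `w` is supported
in `A`, where it extends `q`. Hence the union of `w` and `q`, with no new edges between them, extends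
both. It is a condition since each of its edges is an edge of `w` or of `q`, and that side already
determines the colors of both endpoints. -/


noncomputable section
open scoped Classical
open Ordinal Set

/-- The union of `w` and `q`, with `w` taking precedence; used only when the two agree on the
common domain. -/
def Triple.amalg (w q : Triple) : Triple where
  u := w.u ∪ q.u
  E := fun s => (w.E s).or (q.E s)
  c := fun a => (w.c a).or (q.c a)

theorem IsCond.mem_of_edge {p : Triple} (hp : IsCond p) {s : Set Ordinal}
    (h : (p.E s).isSome) : s ⊆ p.u := by
  obtain ⟨a, ha, b, hb, -, rfl⟩ := hp.2.2.1 s h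
  exact Set.insert_subset ha (Set.singleton_subset_iff.2 hb)

theorem IsCond.trace {q : Triple} (hq : IsCond q) (A : Set Ordinal) : IsCond (q.trace A) := by
  obtain ⟨h1, h2, h3, h4, h5⟩ := hq
  refine ⟨h1.subset inter_subset_left, fun x hx => h2 x hx.1, ?_, ?_, ?_⟩
  · intro s hs
    by_cases hsA : s ⊆ A
    · simp only [Triple.trace, hsA, if_true] at hs
      obtain ⟨a, ha, b, hb, hab, rfl⟩ := h3 s hs
      exact ⟨a, ⟨ha, hsA (by simp)⟩, b, ⟨hb, hsA (by simp)⟩, hab, rfl⟩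
    · simp [Triple.trace, hsA] at hs
  · intro a
    by_cases ha : a ∈ A <;> simp [Triple.trace, ha, h4]
  · rintro s ⟨hs, hsA⟩ t ⟨ht, htA⟩ hc hE
    have hst : ({s, t} : Set Ordinal) ⊆ A :=
      Set.insert_subset hsA (Set.singleton_subset_iff.2 htA)
    simp only [Triple.trace, hsA, htA, hst, if_true] at hc hE ⊢
    exact h5 s hs t ht hc hE

theorem amalg_le_left (w q : Triple) : (w.amalg q).le w :=
  ⟨subset_union_left, fun s b h => by simp [Triple.amalg, h],
    fun a n h => by simp [Triple.amalg, h]⟩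

/-- The amalgam extends `q`: on the support of `w`, which lies in `A`, the values of `q` are those
of its trace, which `w` extends. -/
theorem amalg_le_right {w q : Triple} {A : Set Ordinal} (hw : IsCond w) (hwA : w.u ⊆ A)
    (hle : w.le (q.trace A)) : (w.amalg q).le q := by
  refine ⟨subset_union_right, fun s b h => ?_, fun a n h => ?_⟩
  · rcases hE : w.E s with _ | b'
    · simp [Triple.amalg, hE, h]
    · have hs : s ⊆ A := (hw.mem_of_edge (by simp [hE])).trans hwA
      have := hle.2.1 s b (by simp [Triple.trace, hs, h])
      simp [Triple.amalg, this]
  · rcases hc : w.c a with _ | n'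
    · simp [Triple.amalg, hc, h]
    · have ha : a ∈ A := hwA ((hw.2.2.2.1 a).1 (by simp [hc]))
      have := hle.2.2 a n (by simp [Triple.trace, ha, h])
      simp [Triple.amalg, this]

theorem Triple.le.color_eq {r p : Triple} (h : r.le p) (hp : IsCond p) {a : Ordinal}
    (ha : a ∈ p.u) : r.c a = p.c a := by
  obtain ⟨n, hn⟩ := Option.isSome_iff_exists.1 ((hp.2.2.2.1 a).2 ha)
  rw [hn, h.2.2 a n hn]

/-- An edge already present in a smaller condition obeys the coloring constraint in any
extension, because the colors of its endpoints do not change. -/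
theorem Triple.le.edge_false {r p : Triple} (h : r.le p) (hp : IsCond p) {s t : Ordinal}
    (hE : (p.E {s, t}).isSome) (hc : r.c s = r.c t) : r.E {s, t} = some false := by
  have hs : s ∈ p.u := hp.mem_of_edge hE (by simp)
  have ht : t ∈ p.u := hp.mem_of_edge hE (by simp)
  rw [h.color_eq hp hs, h.color_eq hp ht] at hc
  exact h.2.1 _ _ (hp.2.2.2.2 s hs t ht hc hE)

theorem compat_of_le_trace {w q : Triple} {A : Set Ordinal} (hw : IsCond w) (hq : IsCond q)
    (hwA : w.u ⊆ A) (hle : w.le (q.trace A)) : Compat w q := by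
  have hl := amalg_le_left w q
  have hr := amalg_le_right hw hwA hle
  have hdom : ∀ s, ((w.amalg q).E s).isSome → (w.E s).isSome ∨ (q.E s).isSome := by
    intro s h
    simpa [Triple.amalg] using h
  refine ⟨w.amalg q, ⟨hw.1.union hq.1, ?_, ?_, ?_, ?_⟩, hl, hr⟩
  · rintro x (hx | hx)
    · exact hw.2.1 x hx
    · exact hq.2.1 x hx
  · intro s hs
    rcases hdom s hs with h | h
    · obtain ⟨a, ha, b, hb, hab⟩ := hw.2.2.1 s h
      exact ⟨a, Or.inl ha, b, Or.inl hb, hab⟩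
    · obtain ⟨a, ha, b, hb, hab⟩ := hq.2.2.1 s h
      exact ⟨a, Or.inr ha, b, Or.inr hb, hab⟩
  · intro a
    simp [Triple.amalg, hw.2.2.2.1, hq.2.2.2.1]
  · intro s _ t _ hc hE
    rcases hdom _ hE with h | h
    · exact hl.edge_false hw h hc
    · exact hr.edge_false hq h hc

/-- For `A ⊆ ω₁` and `P₁↾A := {q ∈ P₁ : u^q ⊆ A}`, every condition `p ∈ P₁`
is strongly `(P₁, P₁↾A)`-generic; indeed for every `q ≤ p` the trace `[q]_A`
is a residue of `q` into `P₁↾A`. -/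
theorem strongly_generic_P1 (A : Set Ordinal) (hA : A ⊆ Iio ω₁)
    (p : Triple) (hp : IsCond p) :
    (∀ q, IsCond q → q.le p →
      ∃ r, IsCond r ∧ r.u ⊆ A ∧
        ∀ w, IsCond w → w.u ⊆ A → w.le r → Compat w q) ∧
    (∀ q, IsCond q → q.le p →
      IsCond (q.trace A) ∧ (q.trace A).u ⊆ A ∧
        ∀ w, IsCond w → w.u ⊆ A → w.le (q.trace A) → Compat w q) := by
  have key : ∀ q, IsCond q → q.le p →
      IsCond (q.trace A) ∧ (q.trace A).u ⊆ A ∧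
        ∀ w, IsCond w → w.u ⊆ A → w.le (q.trace A) → Compat w q :=
    fun q hq _ => ⟨hq.trace A, inter_subset_right,
      fun _ hw hwA hle => compat_of_le_trace hw hq hwA hle⟩
  exact ⟨fun q hq hqp => ⟨q.trace A, key q hq hqp⟩, key⟩
end
end

section
/- The poset P₁ has the countable chain condition: every antichain in P₁, i.e. every set of pairwise incompatible conditions, is countable. -/
/-!
Two conditions `p`, `q` are compatible as soon as `E^p ∪ E^q` and `c^p ∪ c^q` are functions: the
union of `p` and `q` has no edge beyond those of `p` and of `q`, so its coloring stays proper
(`compat_of_agree`). A condition therefore amounts to a finite partial function into the countable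
set `Bool ⊕ ℕ` (`Triple.code`), and incompatible conditions have conflicting codes.

It remains to see that pairwise conflicting finite partial functions with countably many values
form a countable family (`countable_of_conflict`). No Δ-system is needed: by induction on the size
of the domains, every member other than a fixed `p` conflicts with `p` at one of the finitely many
points `x` of the domain of `p`. There are countably many choices of `x` and of the value at `x`,
and the members sharing such a choice have one coordinate less left to conflict on.
-/

noncomputable section
open scoped Classical
open Ordinal Set

/-- A family `f` of finite partial functions with countably many values, any two of which conflict
somewhere, is countable. To make the induction go through, the functions are assumed to agree on a
set `D`, and `n` bounds the size of their domains outside `D`. -/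
theorem countable_of_conflict {T I Y : Type*} [Countable Y] (f : T → I → Option Y) (n : ℕ) :
    ∀ (D : Set I) (A : Set T),
      (∀ p ∈ A, ∀ q ∈ A, ∀ i ∈ D, f p i = f q i) →
      (∀ p ∈ A, ∃ s : Finset I, s.card ≤ n ∧ ∀ i, (f p i).isSome → i ∈ D ∨ i ∈ s) →
      (∀ p ∈ A, ∀ q ∈ A, p ≠ q → ∃ i a b, f p i = some a ∧ f q i = some b ∧ a ≠ b) →
      A.Countable := by
  induction n with
  | zero =>
    intro D A hD hs hc
    refine Set.Subsingleton.countable fun p hp q hq => ?_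
    by_contra hne
    obtain ⟨i, a, b, ha, hb, hab⟩ := hc p hp q hq hne
    obtain ⟨s, hs0, hsp⟩ := hs p hp
    have hi := hsp i (by simp [ha])
    rw [Finset.card_eq_zero.mp (Nat.le_zero.mp hs0)] at hi
    have := hD p hp q hq i (by simpa using hi)
    simp_all
  | succ n ih =>
    intro D A hD hs hc
    obtain rfl | ⟨p, hp⟩ := A.eq_empty_or_nonempty
    · exact Set.countable_empty
    obtain ⟨s, -, hsp⟩ := hs p hp
    have key : ∀ x : I, ∀ y : Y, {q ∈ A | x ∉ D ∧ f q x = some y}.Countable := by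
      intro x y
      refine ih (insert x D) _ ?_ ?_ fun q hq r hr => hc q hq.1 r hr.1
      · rintro q ⟨hq, -, hqx⟩ r ⟨hr, -, hrx⟩ i (rfl | hi)
        · rw [hqx, hrx]
        · exact hD q hq r hr i hi
      · rintro q ⟨hq, hx, hqx⟩
        obtain ⟨t, ht, htq⟩ := hs q hq
        have hxt : x ∈ t := (htq x (by simp [hqx])).resolve_left hx
        refine ⟨t.erase x, ?_, fun i hi => ?_⟩
        · rw [Finset.card_erase_of_mem hxt]
          omega
        · by_cases hix : i = x
          · exact Or.inl (Or.inl hix)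
          · exact (htq i hi).imp Or.inr fun h => Finset.mem_erase.mpr ⟨hix, h⟩
    have hU : (⋃ x ∈ s, ⋃ y : Y, {q ∈ A | x ∉ D ∧ f q x = some y}).Countable :=
      s.countable_toSet.biUnion fun x _ => Set.countable_iUnion (key x)
    refine (hU.insert p).mono fun q hq => ?_
    by_cases hqp : q = p
    · exact Or.inl hqp
    obtain ⟨i, a, b, ha, hb, hab⟩ := hc p hp q hq (Ne.symm hqp)
    have hiD : i ∉ D := fun h => hab (by simpa [ha, hb] using hD p hp q hq i h)
    have his : i ∈ s := (hsp i (by simp [ha])).resolve_left hiD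
    refine Or.inr ?_
    simp only [Set.mem_iUnion]
    exact ⟨i, his, b, hq, hiD, hb⟩

/-- The edge function and the coloring of `p`, combined into a single partial function on the
disjoint union of their domains; the vertex set is recovered as the domain of the coloring. -/
def Triple.code (p : Triple) : Set Ordinal ⊕ Ordinal → Option (Bool ⊕ ℕ) :=
  Sum.elim (fun s => (p.E s).map Sum.inl) (fun a => (p.c a).map Sum.inr)

theorem IsCond.exists_finset {p : Triple} (hp : IsCond p) :
    ∃ s : Finset (Set Ordinal ⊕ Ordinal), ∀ i, (p.code i).isSome → i ∈ s := by
  obtain ⟨hfin, -, hE, hc, -⟩ := hp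
  have h : (Sum.inl '' {s | s ⊆ p.u} ∪ Sum.inr '' p.u :
      Set (Set Ordinal ⊕ Ordinal)).Finite :=
    (hfin.finite_subsets.image _).union (hfin.image _)
  refine ⟨h.toFinset, ?_⟩
  rintro (s | a) hi
  · obtain ⟨a, ha, b, hb, -, rfl⟩ := hE s (by simpa [Triple.code] using hi)
    simp [Set.insert_subset_iff, ha, hb]
  · simpa [Triple.code, hc] using hi

/-- Conditions whose edge functions and colorings agree on their common domains are compatible:
their union is a condition. -/
theorem compat_of_agree {p q : Triple} (hp : IsCond p) (hq : IsCond q)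
    (hE : ∀ s a b, p.E s = some a → q.E s = some b → a = b)
    (hc : ∀ x a b, p.c x = some a → q.c x = some b → a = b) : Compat p q := by
  obtain ⟨pf, pω, pE, pc, pcol⟩ := hp
  obtain ⟨qf, qω, qE, qc, qcol⟩ := hq
  -- Each component of the union extends the corresponding components of `p` and of `q`.
  have ep : ∀ s b, p.E s = some b → (p.E s).or (q.E s) = some b := by
    intro s b h; simp [h]
  have eq : ∀ s b, q.E s = some b → (p.E s).or (q.E s) = some b := by
    intro s b h
    cases h' : p.E s with
    | none => simp [h]
    | some a => simp [hE s a b h' h]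
  have cp : ∀ x n, p.c x = some n → (p.c x).or (q.c x) = some n := by
    intro x n h; simp [h]
  have cq : ∀ x n, q.c x = some n → (p.c x).or (q.c x) = some n := by
    intro x n h
    cases h' : p.c x with
    | none => simp [h]
    | some a => simp [hc x a n h' h]
  -- An edge coming from one of the two conditions has both endpoints in that condition.
  have mem : ∀ (r : Triple), (∀ s, (r.E s).isSome → ∃ a ∈ r.u, ∃ b ∈ r.u, a ≠ b ∧ s = {a, b}) →
      ∀ s t, (r.E {s, t}).isSome → s ∈ r.u ∧ t ∈ r.u := by
    intro r hr s t h
    obtain ⟨a, ha, b, hb, -, hst⟩ := hr _ h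
    have hs : s ∈ ({a, b} : Set Ordinal) := hst ▸ Set.mem_insert s {t}
    have ht : t ∈ ({a, b} : Set Ordinal) := hst ▸ Set.mem_insert_of_mem s rfl
    constructor
    · rcases hs with rfl | rfl <;> assumption
    · rcases ht with rfl | rfl <;> assumption
  -- Hence a monochromatic edge of the union is already monochromatic in that condition.
  have col : ∀ (r : Triple), (∀ s, (r.E s).isSome → ∃ a ∈ r.u, ∃ b ∈ r.u, a ≠ b ∧ s = {a, b}) →
      (∀ a, (r.c a).isSome ↔ a ∈ r.u) →
      (∀ s ∈ r.u, ∀ t ∈ r.u, r.c s = r.c t → (r.E {s, t}).isSome → r.E {s, t} = some false) →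
      (∀ x n, r.c x = some n → (p.c x).or (q.c x) = some n) →
      ∀ s t, (p.c s).or (q.c s) = (p.c t).or (q.c t) → (r.E {s, t}).isSome →
        r.E {s, t} = some false := by
    intro r hr hrc hcol hext s t hst h
    obtain ⟨hs, ht⟩ := mem r hr s t h
    obtain ⟨m, hm⟩ := Option.isSome_iff_exists.mp ((hrc s).mpr hs)
    obtain ⟨n, hn⟩ := Option.isSome_iff_exists.mp ((hrc t).mpr ht)
    refine hcol s hs t ht ?_ h
    rw [hm, hn, ← hext s m hm, ← hext t n hn, hst]
  refine ⟨⟨p.u ∪ q.u, fun s => (p.E s).or (q.E s), fun x => (p.c x).or (q.c x)⟩,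
    ⟨pf.union qf, ?_, ?_, ?_, ?_⟩, ⟨Set.subset_union_left, ep, cp⟩,
    ⟨Set.subset_union_right, eq, cq⟩⟩
  · exact fun x hx => hx.elim (pω x) (qω x)
  · intro s h
    simp only [Option.isSome_or, Bool.or_eq_true] at h
    rcases h with h | h
    · obtain ⟨a, ha, b, hb, hab⟩ := pE s h
      exact ⟨a, Or.inl ha, b, Or.inl hb, hab⟩
    · obtain ⟨a, ha, b, hb, hab⟩ := qE s h
      exact ⟨a, Or.inr ha, b, Or.inr hb, hab⟩
  · intro a
    simp [Option.isSome_or, pc, qc]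
  · intro s _ t _ hst h
    simp only [Option.isSome_or, Bool.or_eq_true] at h
    rcases h with h | h
    · exact ep _ _ (col p pE pc pcol cp s t hst h)
    · exact eq _ _ (col q qE qc qcol cq s t hst h)

/-- The poset `P₁` has the countable chain condition: every set of pairwise
incompatible conditions is countable. -/
theorem P1_ccc (A : Set Triple) (hA : ∀ p ∈ A, IsCond p)
    (hanti : ∀ p ∈ A, ∀ q ∈ A, p ≠ q → ¬ Compat p q) :
    A.Countable := by
  -- Split the antichain by the size of the domain of the code.
  have hA' : A ⊆ ⋃ n : ℕ, {p ∈ A | ∃ s : Finset (Set Ordinal ⊕ Ordinal), s.card ≤ n ∧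
      ∀ i, (p.code i).isSome → i ∈ (∅ : Set (Set Ordinal ⊕ Ordinal)) ∨ i ∈ s} := by
    intro p hp
    obtain ⟨s, hs⟩ := (hA p hp).exists_finset
    exact Set.mem_iUnion.mpr ⟨s.card, hp, s, le_rfl, fun i hi => Or.inr (hs i hi)⟩
  refine (Set.countable_iUnion fun n => ?_).mono hA'
  refine countable_of_conflict Triple.code n ∅ _ (by simp) (fun p hp => hp.2) ?_
  rintro p ⟨hp, -⟩ q ⟨hq, -⟩ hne
  by_contra! hno
  refine hanti p hp q hq hne (compat_of_agree (hA p hp) (hA q hq) ?_ ?_)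
  · intro s a b ha hb
    exact Sum.inl_injective (hno (Sum.inl s) (Sum.inl a) (Sum.inl b)
      (by simp [Triple.code, ha]) (by simp [Triple.code, hb]))
  · intro x a b ha hb
    exact Sum.inr_injective (hno (Sum.inr x) (Sum.inr a) (Sum.inr b)
      (by simp [Triple.code, ha]) (by simp [Triple.code, hb]))
end
end

section
/- Let p ∈ P₁, let D ⊆ uᵖ, let n ∈ ℕ be such that cᵖ(t) ≠ n for every t ∈ D, and let β < ω₁ with β ∉ uᵖ. Then there exists q ≤ p with β ∈ u^q, c^q(β) = n, E^q({β,t}) = 1 for every t ∈ D, and E^q({β,t}) = 0 for every t ∈ uᵖ ∖ D. -/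
/-! The extension is explicit: add `β` to the vertex set with colour `n`, keep `p` on the old
vertices, and give the pair `{β, t}` the value `1` for `t ∈ D` and `0` for `t ∈ uᵖ \ D`. Since
`β ∉ uᵖ`, no set containing `β` lies in the domain of `Eᵖ`, so nothing old is overwritten, and `t`
is determined by `{β, t}`. The colouring requirement on a new pair `{β, t}` can only fail for
`t ∈ D` of colour `n`, which is excluded by hypothesis. -/

noncomputable section
open scoped Classical
open Ordinal Set

/-- Given `p ∈ P₁`, a set `D ⊆ uᵖ` avoiding the color `n`, and a new vertex
`β < ω₁` with `β ∉ uᵖ`, there is an extension `q ≤ p` adding `β` with color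
`n`, joined to every vertex of `D` and to no other vertex of `uᵖ`. -/
theorem extend_new_vertex (p : Triple) (hp : IsCond p)
    (D : Set Ordinal) (hD : D ⊆ p.u)
    (n : ℕ) (hn : ∀ t ∈ D, p.c t ≠ some n)
    (β : Ordinal) (hβ : β < ω₁) (hβu : β ∉ p.u) :
    ∃ q, IsCond q ∧ q.le p ∧ β ∈ q.u ∧ q.c β = some n ∧
      (∀ t ∈ D, q.E {β, t} = some true) ∧
      (∀ t ∈ p.u, t ∉ D → q.E {β, t} = some false) := by
  -- An edge value is assigned to a set `s` containing `β` only when `s = {β, t}` with `t ∈ uᵖ`.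
  let q : Triple :=
    { u := insert β p.u
      E := fun s => if β ∈ s then
          (if ∃ t ∈ D, s = {β, t} then some true
            else if ∃ t ∈ p.u, s = {β, t} then some false else none)
        else p.E s
      c := fun a => if a = β then some n else p.c a }
  obtain ⟨hfin, hlt, hE, hc, hcol⟩ := hp
  have pair_inj : ∀ t ∈ p.u, ∀ t', ({β, t} : Set Ordinal) = {β, t'} → t = t' := by
    intro t ht t' h
    have h1 : t ∈ ({β, t'} : Set Ordinal) := h ▸ (by simp)
    rcases h1 with h1 | h1
    · exact absurd (h1 ▸ ht) hβu
    · exact h1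
  have hne : ∀ t ∈ p.u, t ≠ β := fun t ht h => hβu (h ▸ ht)
  have hEβ : ∀ s, (p.E s).isSome → β ∉ s := by
    intro s hs hβs
    obtain ⟨a, ha, b, hb, -, rfl⟩ := hE s hs
    rcases hβs with h | h
    · exact hne a ha h.symm
    · exact hne b hb h.symm
  have hqD : ∀ t ∈ D, q.E {β, t} = some true := by
    intro t ht
    have h : ∃ t' ∈ D, ({β, t} : Set Ordinal) = {β, t'} := ⟨t, ht, rfl⟩
    simp only [q]
    rw [if_pos (by simp), if_pos h]
  have hqN : ∀ t ∈ p.u, t ∉ D → q.E {β, t} = some false := by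
    intro t ht htD
    have h : ¬ ∃ t' ∈ D, ({β, t} : Set Ordinal) = {β, t'} := by
      rintro ⟨t', ht', h⟩
      exact htD (pair_inj t ht t' h ▸ ht')
    have h' : ∃ t' ∈ p.u, ({β, t} : Set Ordinal) = {β, t'} := ⟨t, ht, rfl⟩
    simp only [q]
    rw [if_pos (by simp), if_neg h, if_pos h']
  have hqc : q.c β = some n := if_pos rfl
  have hqc' : ∀ t ∈ p.u, q.c t = p.c t := fun t ht => if_neg (hne t ht)
  have hqdom : ∀ s, β ∈ s → (q.E s).isSome → ∃ t ∈ p.u, s = {β, t} := by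
    intro s hβs hs
    simp only [q] at hs
    rw [if_pos hβs] at hs
    split_ifs at hs with h1 h2
    · obtain ⟨t, ht, h⟩ := h1
      exact ⟨t, hD ht, h⟩
    · exact h2
    · simp at hs
  have hqold : ∀ s, β ∉ s → q.E s = p.E s := fun s hs => if_neg hs
  -- The colour of `β` differs from every colour used on `D`, so an equally coloured `t` is
  -- outside `D`.
  have hβt : ∀ t ∈ p.u, q.c β = q.c t → q.E {β, t} = some false := by
    intro t ht h
    refine hqN t ht fun htD => hn t htD ?_
    rw [← hqc' t ht, ← h, hqc]
  have hββ : ¬ (q.E {β, β}).isSome := by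
    intro h
    obtain ⟨t, ht, h⟩ := hqdom _ (by simp) h
    have h1 : t ∈ ({β, β} : Set Ordinal) := h ▸ (by simp)
    exact hne t ht (by simpa using h1)
  refine ⟨q, ⟨hfin.insert β, ?_, ?_, ?_, ?_⟩, ⟨subset_insert _ _, ?_, ?_⟩,
    mem_insert _ _, hqc, hqD, hqN⟩
  · rintro x (rfl | hx)
    · exact hβ
    · exact hlt x hx
  · intro s hs
    by_cases hβs : β ∈ s
    · obtain ⟨t, ht, rfl⟩ := hqdom s hβs hs
      exact ⟨β, mem_insert _ _, t, mem_insert_of_mem _ ht, (hne t ht).symm, rfl⟩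
    · rw [hqold s hβs] at hs
      obtain ⟨a, ha, b, hb, h⟩ := hE s hs
      exact ⟨a, mem_insert_of_mem _ ha, b, mem_insert_of_mem _ hb, h⟩
  · intro a
    by_cases ha : a = β
    · subst ha
      simp [q]
    · simp [q, ha, hc]
  · intro s hs t ht hst hsome
    rcases hs with hs | hs <;> rcases ht with ht | ht
    · subst hs ht
      exact absurd hsome hββ
    · subst hs
      exact hβt t ht hst
    · subst ht
      rw [pair_comm]
      exact hβt s hs hst.symm
    · have hβs : β ∉ ({s, t} : Set Ordinal) := by
        rintro (h | h)
        · exact hne s hs h.symm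
        · exact hne t ht h.symm
      rw [hqold _ hβs] at hsome ⊢
      rw [hqc' s hs, hqc' t ht] at hst
      exact hcol s hs t ht hst hsome
  · intro s b hs
    rw [hqold s (hEβ s (by simp [hs])), hs]
  · intro a m ha
    rw [hqc' a ((hc a).1 (by simp [ha])), ha]
end
end
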